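/- arXiv:2402.15139 — 5 statements merged into one kernel-verified Lean document; each statement's English description precedes it below -/
import Mathlib

section
/- Mass decomposition at infinity (core of Theorem 2.2): let N ≥ 1 and let (f_n) be a sequence of measurable functions f_n : ℝ^N → [0,∞) with sup_n ∫_{ℝ^N} f_n dx < ∞. Suppose there is a finite nonnegative Borel measure ν on ℝ^N such that ∫_{ℝ^N} φ f_n dx → ∫_{ℝ^N} φ dν as n → ∞ for every continuous compactly supported φ : ℝ^N → ℝ. Then: (a) the limit ν_∞ := lim_{R→∞} limsup_{n→∞} ∫_{{x : |x| > R}} f_n dx exists (the inner quantity is nonincreasing in R and nonnegative); and (b) limsup_{n→∞} ∫_{ℝ^N} f_n dx = ν(ℝ^N) + ν_∞. -/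
open MeasureTheory Filter Topology

/-- Limsup comparison with a convergent perturbation. -/
theorem mdi_limsup_le (u v w : ℕ → ℝ) (W A B : ℝ) (hw : Tendsto w atTop (𝓝 W))
    (hu : ∀ n, 0 ≤ u n) (hv : ∀ n, 0 ≤ v n ∧ v n ≤ B)
    (h : ∀ n, u n ≤ v n + w n) : limsup u atTop ≤ limsup v atTop + W := by
  refine le_of_forall_pos_le_add fun ε hε => ?_
  have hvb : IsBoundedUnder (· ≤ ·) atTop v := isBoundedUnder_of ⟨B, fun n => (hv n).2⟩
  have h1 : ∀ᶠ n in atTop, v n < limsup v atTop + ε / 2 :=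
    eventually_lt_of_limsup_lt (by linarith) hvb
  have h2 : ∀ᶠ n in atTop, w n < W + ε / 2 := hw.eventually_lt_const (by linarith)
  have hub : IsCoboundedUnder (· ≤ ·) atTop u :=
    (isBoundedUnder_of ⟨0, hu⟩ : IsBoundedUnder (· ≥ ·) atTop u).isCoboundedUnder_le
  refine limsup_le_of_le hub ?_
  filter_upwards [h1, h2] with n a b
  linarith [h n]

/-- Mass decomposition at infinity (core of Theorem 2.2). -/
theorem mass_decomposition_at_infinity
    {N : ℕ} (hN : 1 ≤ N)
    (f : ℕ → EuclideanSpace ℝ (Fin N) → ℝ)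
    (hf_meas : ∀ n, Measurable (f n))
    (hf_nonneg : ∀ n x, 0 ≤ f n x)
    (hf_int : ∀ n, Integrable (f n) volume)
    (M : ℝ) (hf_sup : ∀ n, ∫ x, f n x ≤ M)
    (ν : Measure (EuclideanSpace ℝ (Fin N))) [IsFiniteMeasure ν]
    (hweak : ∀ φ : EuclideanSpace ℝ (Fin N) → ℝ, Continuous φ → HasCompactSupport φ →
      Tendsto (fun n => ∫ x, φ x * f n x) atTop (𝓝 (∫ x, φ x ∂ν))) :
    ∃ νinf : ℝ,
      (Antitone fun R : ℝ =>
          limsup (fun n => ∫ x in {x : EuclideanSpace ℝ (Fin N) | R < ‖x‖}, f n x) atTop) ∧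
      (∀ R : ℝ,
          0 ≤ limsup (fun n => ∫ x in {x : EuclideanSpace ℝ (Fin N) | R < ‖x‖}, f n x) atTop) ∧
      Tendsto
        (fun R : ℝ =>
          limsup (fun n => ∫ x in {x : EuclideanSpace ℝ (Fin N) | R < ‖x‖}, f n x) atTop)
        atTop (𝓝 νinf) ∧
      limsup (fun n => ∫ x, f n x) atTop = (ν Set.univ).toReal + νinf := by
  set T : ℝ → ℕ → ℝ := fun R n => ∫ x in {x : EuclideanSpace ℝ (Fin N) | R < ‖x‖}, f n x with hT
  have hS : ∀ R : ℝ, MeasurableSet {x : EuclideanSpace ℝ (Fin N) | R < ‖x‖} := fun R =>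
    measurableSet_lt measurable_const measurable_norm
  have hT0 : ∀ R n, 0 ≤ T R n := fun R n => integral_nonneg (hf_nonneg n)
  have hTF : ∀ R n, T R n ≤ ∫ x, f n x := fun R n =>
    setIntegral_le_integral (hf_int n) (Eventually.of_forall (hf_nonneg n))
  have hTM : ∀ R n, T R n ≤ M := fun R n => (hTF R n).trans (hf_sup n)
  have hanti : Antitone fun R : ℝ => limsup (T R) atTop := by
    intro R S hRS
    have := mdi_limsup_le (T S) (T R) (fun _ => 0) 0 0 M tendsto_const_nhds (hT0 S)
      (fun n => ⟨hT0 R n, hTM R n⟩) (fun n => by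
        rw [add_zero]
        exact setIntegral_mono_set (hf_int n).integrableOn
          (Eventually.of_forall (hf_nonneg n))
          (Eventually.of_forall fun x (hx : S < ‖x‖) => lt_of_le_of_lt hRS hx))
    simpa using this
  have hnn : ∀ R : ℝ, 0 ≤ limsup (T R) atTop := fun R =>
    le_limsup_of_frequently_le (Frequently.of_forall (hT0 R))
      (isBoundedUnder_of ⟨M, hTM R⟩)
  set φ : ℝ → EuclideanSpace ℝ (Fin N) → ℝ := fun R x => max 0 (min 1 (R + 1 - ‖x‖)) with hφ
  have hφc : ∀ R, Continuous (φ R) := fun R => by simp only [hφ]; fun_prop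
  have hφ0 : ∀ R x, 0 ≤ φ R x := fun R x => le_max_left _ _
  have hφ1 : ∀ R x, φ R x ≤ 1 := fun R x => max_le zero_le_one (min_le_left _ _)
  have hφin : ∀ R x, ‖x‖ ≤ R → φ R x = 1 := fun R x hx => by
    simp only [hφ]
    rw [min_eq_left (by linarith), max_eq_right zero_le_one]
  have hφout : ∀ R x, R + 1 ≤ ‖x‖ → φ R x = 0 := fun R x hx => by
    simp only [hφ]
    exact max_eq_left ((min_le_right _ _).trans (by linarith))
  have hφs : ∀ R, HasCompactSupport (φ R) := fun R =>
    HasCompactSupport.intro (isCompact_closedBall (0 : EuclideanSpace ℝ (Fin N)) (R + 1))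
      (fun x hx => hφout R x (by
        rw [Metric.mem_closedBall, dist_zero_right] at hx
        linarith))
  have hφint : ∀ R n, Integrable (fun x => φ R x * f n x) volume := fun R n =>
    (hf_int n).bdd_mul (c := 1) (hφc R).aestronglyMeasurable
      (Eventually.of_forall fun x => by
        rw [Real.norm_eq_abs, abs_of_nonneg (hφ0 R x)]; exact hφ1 R x)
  have hind : ∀ R n, T R n = ∫ x, {x : EuclideanSpace ℝ (Fin N) | R < ‖x‖}.indicator (f n) x :=
    fun R n => (integral_indicator (hS R)).symm
  have hindint : ∀ R n, Integrable
      ({x : EuclideanSpace ℝ (Fin N) | R < ‖x‖}.indicator (f n)) volume :=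
    fun R n => (hf_int n).indicator (hS R)
  have hup : ∀ R n, ∫ x, f n x ≤ T R n + ∫ x, φ R x * f n x := fun R n => by
    rw [hind, ← integral_add (hindint R n) (hφint R n)]
    refine integral_mono (hf_int n) ((hindint R n).add (hφint R n)) fun x => ?_
    by_cases hx : R < ‖x‖
    · have := mul_nonneg (hφ0 R x) (hf_nonneg n x)
      simp [Set.indicator, hx]; linarith
    · simp [Set.indicator, hx, hφin R x (not_lt.mp hx)]
  have hlo : ∀ R n, T (R + 1) n + ∫ x, φ R x * f n x ≤ ∫ x, f n x := fun R n => by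
    rw [hind, ← integral_add (hindint _ n) (hφint R n)]
    refine integral_mono ((hindint _ n).add (hφint R n)) (hf_int n) fun x => ?_
    by_cases hx : R + 1 < ‖x‖
    · simp [Set.indicator, hx, hφout R x hx.le]
    · have := mul_le_mul_of_nonneg_right (hφ1 R x) (hf_nonneg n x)
      simp [Set.indicator, hx]; linarith
  have hF0 : ∀ n, 0 ≤ ∫ x, f n x := fun n => integral_nonneg (hf_nonneg n)
  set L := limsup (fun n => ∫ x, f n x) atTop with hL
  have hA : ∀ R, L - ∫ x, φ R x ∂ν ≤ limsup (T R) atTop := fun R => by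
    have := mdi_limsup_le (fun n => ∫ x, f n x) (T R) _ _ 0 M
      (hweak (φ R) (hφc R) (hφs R)) hF0 (fun n => ⟨hT0 R n, hTM R n⟩) (hup R)
    linarith
  have hB : ∀ R, limsup (T (R + 1)) atTop ≤ L - ∫ x, φ R x ∂ν := fun R => by
    have := mdi_limsup_le (T (R + 1)) (fun n => ∫ x, f n x) _ _ 0 M
      (hweak (φ R) (hφc R) (hφs R)).neg (hT0 _) (fun n => ⟨hF0 n, hf_sup n⟩)
      (fun n => by linarith [hlo R n])
    linarith
  have hI : Tendsto (fun R => ∫ x, φ R x ∂ν) atTop (𝓝 (ν Set.univ).toReal) := by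
    have h1 : (ν Set.univ).toReal = ∫ _x, (1 : ℝ) ∂ν := by simp [Measure.real]
    rw [h1]
    refine tendsto_integral_filter_of_dominated_convergence (fun _ => 1)
      (Eventually.of_forall fun R => (hφc R).aestronglyMeasurable)
      (Eventually.of_forall fun R => Eventually.of_forall fun x => ?_)
      (integrable_const _) (Eventually.of_forall fun x => ?_)
    · rw [Real.norm_eq_abs, abs_of_nonneg (hφ0 R x)]; exact hφ1 R x
    · refine tendsto_const_nhds.congr' ?_
      filter_upwards [eventually_ge_atTop ‖x‖] with R hR
      exact (hφin R x hR).symm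
  refine ⟨L - (ν Set.univ).toReal, hanti, hnn, ?_, by ring⟩
  have hI' : Tendsto (fun R : ℝ => ∫ x, φ (R - 1) x ∂ν) atTop (𝓝 (ν Set.univ).toReal) :=
    hI.comp (tendsto_atTop_add_const_right atTop (-1 : ℝ) tendsto_id)
  refine tendsto_of_tendsto_of_tendsto_of_le_of_le (tendsto_const_nhds.sub hI)
    (tendsto_const_nhds.sub hI') hA (fun R => ?_)
  have := hB (R - 1)
  rwa [sub_add_cancel] at this
end

section
/- Generalized Riesz convergence theorem with variable exponent (proved at the end of Lemma 3.1): let N ≥ 1 and let r : ℝ^N → ℝ be measurable with 1 ≤ r(x) ≤ r⁺ < ∞ for a.e. x. Let (v_n) and v be measurable real-valued functions on ℝ^N such that v_n → v almost everywhere, ∫_{ℝ^N} |v_n(x)|^{r(x)} dx < ∞ for all n, ∫_{ℝ^N} |v(x)|^{r(x)} dx < ∞, and ∫_{ℝ^N} |v_n(x)|^{r(x)} dx → ∫_{ℝ^N} |v(x)|^{r(x)} dx as n → ∞. Then ∫_{ℝ^N} |v_n(x) − v(x)|^{r(x)} dx → 0 as n → ∞. -/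
open MeasureTheory Filter Topology

theorem aux_rpow_sub_le (a b p q : ℝ) (hp : 1 ≤ p) (hq : p ≤ q) :
    |a - b| ^ p ≤ 2 ^ q * (|a| ^ p + |b| ^ p) := by
  have h0 : 0 ≤ p := by linarith
  have ha := abs_nonneg a
  have hb := abs_nonneg b
  have h1 : |a - b| ≤ 2 * max |a| |b| := by
    have := abs_sub a b
    have := le_max_left |a| |b|
    have := le_max_right |a| |b|
    linarith
  have hm : 0 ≤ max |a| |b| := le_max_of_le_left ha
  have h2 : (max |a| |b|) ^ p ≤ |a| ^ p + |b| ^ p := by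
    have := Real.rpow_nonneg ha p
    have := Real.rpow_nonneg hb p
    rcases max_choice |a| |b| with h | h <;> rw [h] <;> linarith
  calc |a - b| ^ p ≤ (2 * max |a| |b|) ^ p := Real.rpow_le_rpow (abs_nonneg _) h1 h0
    _ = 2 ^ p * (max |a| |b|) ^ p := Real.mul_rpow (by norm_num) hm
    _ ≤ 2 ^ q * (|a| ^ p + |b| ^ p) := by
        have : (2:ℝ) ^ p ≤ 2 ^ q := Real.rpow_le_rpow_of_exponent_le (by norm_num) hq
        gcongr

/-- Generalized Riesz convergence theorem with variable exponent
(proved at the end of Lemma 3.1). -/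
theorem riesz_convergence_variable_exponent
    {N : ℕ} (hN : 1 ≤ N)
    (r : EuclideanSpace ℝ (Fin N) → ℝ) (hr_meas : Measurable r)
    (rp : ℝ) (hr_ae : ∀ᵐ x ∂volume, 1 ≤ r x ∧ r x ≤ rp)
    (v : ℕ → EuclideanSpace ℝ (Fin N) → ℝ)
    (vlim : EuclideanSpace ℝ (Fin N) → ℝ)
    (hv_meas : ∀ n, Measurable (v n)) (hvlim_meas : Measurable vlim)
    (hae : ∀ᵐ x ∂volume, Tendsto (fun n => v n x) atTop (𝓝 (vlim x)))
    (hv_int : ∀ n, Integrable (fun x => |v n x| ^ (r x)) volume)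
    (hvlim_int : Integrable (fun x => |vlim x| ^ (r x)) volume)
    (hconv : Tendsto (fun n => ∫ x, |v n x| ^ (r x)) atTop
      (𝓝 (∫ x, |vlim x| ^ (r x)))) :
    Tendsto (fun n => ∫ x, |v n x - vlim x| ^ (r x)) atTop (𝓝 0) := by
  have hf0 : ∀ n x, 0 ≤ |v n x| ^ (r x) := fun n x => Real.rpow_nonneg (abs_nonneg _) _
  have hl0 : ∀ x, 0 ≤ |vlim x| ^ (r x) := fun x => Real.rpow_nonneg (abs_nonneg _) _
  have hg0 : ∀ n x, 0 ≤ |v n x - vlim x| ^ (r x) := fun n x => Real.rpow_nonneg (abs_nonneg _) _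
  have hgm : ∀ n, Measurable (fun x => |v n x - vlim x| ^ (r x)) := fun n => by
    have := hv_meas n
    fun_prop
  set f : ℕ → EuclideanSpace ℝ (Fin N) → ℝ := fun n x => |v n x| ^ (r x) with hf
  set l : EuclideanSpace ℝ (Fin N) → ℝ := fun x => |vlim x| ^ (r x) with hl
  set g : ℕ → EuclideanSpace ℝ (Fin N) → ℝ := fun n x => |v n x - vlim x| ^ (r x) with hg
  change ∀ n, Integrable (f n) volume at hv_int
  change ∀ n x, 0 ≤ f n x at hf0
  change ∀ x, 0 ≤ l x at hl0
  change ∀ n x, 0 ≤ g n x at hg0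
  have hfl : ∀ᵐ x ∂volume, Tendsto (fun n => f n x) atTop (𝓝 (l x)) := by
    filter_upwards [hae, hr_ae] with x hx hrx
    exact (hx.abs).rpow_const (Or.inr (by linarith [hrx.1]))
  have hgl : ∀ᵐ x ∂volume, Tendsto (fun n => g n x) atTop (𝓝 0) := by
    filter_upwards [hae, hr_ae] with x hx hrx
    have h := ((hx.sub_const (vlim x)).abs).rpow_const (p := r x) (Or.inr (by linarith [hrx.1]))
    simpa [Real.zero_rpow (show r x ≠ 0 by linarith [hrx.1])] using h
  -- positive part of `l - f n`
  have hpos_int : ∀ n, Integrable (fun x => max (l x - f n x) 0) volume :=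
    fun n => (hvlim_int.sub (hv_int n)).pos_part
  have hpos : Tendsto (fun n => ∫ x, max (l x - f n x) 0) atTop (𝓝 0) := by
    have := tendsto_integral_of_dominated_convergence (μ := volume)
      (F := fun n x => max (l x - f n x) 0) (f := fun _ => (0:ℝ)) l
      (fun n => (hpos_int n).aestronglyMeasurable) hvlim_int
      (fun n => Eventually.of_forall fun x => by
        rw [Real.norm_of_nonneg (le_max_right _ _)]
        exact max_le (by linarith [hf0 n x]) (hl0 x)) (by
        filter_upwards [hfl] with x hx
        have h := (hx.const_sub (l x)).max (tendsto_const_nhds (x := (0:ℝ)))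
        simpa using h)
    simpa using this
  have habs_int : ∀ n, Integrable (fun x => |f n x - l x|) volume :=
    fun n => ((hv_int n).sub hvlim_int).abs
  have habs : Tendsto (fun n => ∫ x, |f n x - l x|) atTop (𝓝 0) := by
    have he : ∀ n, ∫ x, |f n x - l x|
        = ((∫ x, f n x) - ∫ x, l x) + 2 * ∫ x, max (l x - f n x) 0 := fun n => by
      rw [← integral_sub (hv_int n) hvlim_int, ← integral_const_mul,
        ← integral_add (f := fun x => f n x - l x) ((hv_int n).sub hvlim_int) ((hpos_int n).const_mul 2)]
      congr 1
      ext x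
      rcases le_total (f n x) (l x) with h | h
      · rw [abs_of_nonpos (by linarith), max_eq_left (by linarith)]; ring
      · rw [abs_of_nonneg (by linarith), max_eq_right (by linarith)]; ring
    simp_rw [he]
    have h := (hconv.sub_const (∫ x, l x)).add (hpos.const_mul 2)
    simpa using h
  set C : ℝ := 2 ^ rp with hC
  have hC0 : 0 ≤ C := Real.rpow_nonneg (by norm_num) _
  have hbd : Integrable (fun x => 2 * C * l x) volume := hvlim_int.const_mul _
  have hbd0 : ∀ x, 0 ≤ 2 * C * l x := fun x => mul_nonneg (by linarith) (hl0 x)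
  have hminb : ∀ n x, ‖min (g n x) (2 * C * l x)‖ ≤ 2 * C * l x := fun n x => by
    rw [Real.norm_of_nonneg (le_min (hg0 n x) (hbd0 x))]
    exact min_le_right _ _
  have hminm : ∀ n, AEStronglyMeasurable (fun x => min (g n x) (2 * C * l x)) volume :=
    fun n => (hgm n).aestronglyMeasurable.inf hbd.aestronglyMeasurable
  have hmin_int : ∀ n, Integrable (fun x => min (g n x) (2 * C * l x)) volume :=
    fun n => hbd.mono' (hminm n) (Eventually.of_forall (hminb n))
  have hmin : Tendsto (fun n => ∫ x, min (g n x) (2 * C * l x)) atTop (𝓝 0) := by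
    have := tendsto_integral_of_dominated_convergence (μ := volume)
      (F := fun n x => min (g n x) (2 * C * l x)) (f := fun _ => (0:ℝ)) _
      hminm hbd (fun n => Eventually.of_forall (hminb n)) (by
        filter_upwards [hgl] with x hx
        have h := hx.min (tendsto_const_nhds (x := 2 * C * l x))
        rwa [min_eq_left (hbd0 x)] at h)
    simpa using this
  have hup : Tendsto (fun n => C * (∫ x, |f n x - l x|) + ∫ x, min (g n x) (2 * C * l x))
      atTop (𝓝 0) := by
    simpa using (habs.const_mul C).add hmin
  refine squeeze_zero (fun n => integral_nonneg (hg0 n)) (fun n => ?_) hup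
  rw [← integral_const_mul, ← integral_add ((habs_int n).const_mul C) (hmin_int n)]
  refine integral_mono_of_nonneg (Eventually.of_forall (hg0 n))
    (((habs_int n).const_mul C).add (hmin_int n)) ?_
  filter_upwards [hr_ae] with x hrx
  have h1 : g n x ≤ C * (f n x + l x) := aux_rpow_sub_le _ _ _ _ hrx.1 hrx.2
  have h2 : C * (f n x - l x) ≤ C * |f n x - l x| :=
    mul_le_mul_of_nonneg_left (le_abs_self _) hC0
  have h3 : 0 ≤ C * |f n x - l x| := mul_nonneg hC0 (abs_nonneg _)
  change g n x ≤ C * |f n x - l x| + min (g n x) (2 * C * l x)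
  rcases min_choice (g n x) (2 * C * l x) with h | h <;> rw [h] <;> nlinarith
end

section
/- Strong monotonicity inequality for the p-Laplacian map, case p ≥ 2 (inequality (3.15), first case, with a_i ≡ 1): for every real number p ≥ 2 there exists a constant c_p > 0 such that for every N ≥ 1 and all vectors η, ξ ∈ ℝ^N, |η − ξ|^p ≤ c_p ⟨|η|^{p−2}η − |ξ|^{p−2}ξ, η − ξ⟩, where ⟨·,·⟩ is the Euclidean inner product, |·| the Euclidean norm, and |x|^{p−2}x is interpreted as 0 when x = 0. -/
open scoped InnerProductSpace

/-- Strong monotonicity inequality for the p-Laplacian map, case `p ≥ 2`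
(inequality (3.15), first case, with `a_i ≡ 1`). -/
theorem pLaplacian_strong_monotonicity_ge_two
    (p : ℝ) (hp : 2 ≤ p) :
    ∃ c : ℝ, 0 < c ∧
      ∀ (N : ℕ), 1 ≤ N → ∀ η ξ : EuclideanSpace ℝ (Fin N),
        ‖η - ξ‖ ^ p ≤
          c * ⟪(‖η‖ ^ (p - 2)) • η - (‖ξ‖ ^ (p - 2)) • ξ, η - ξ⟫_ℝ := by
  have hq : 0 ≤ p - 2 := by linarith
  refine ⟨2 * 2 ^ (p - 2), by positivity, ?_⟩
  intro N _ η ξ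
  have h1 : ‖η - ξ‖ ^ p = ‖η - ξ‖ ^ (p - 2) * ‖η - ξ‖ ^ 2 := by
    rw [← Real.rpow_two, ← Real.rpow_add_of_nonneg (norm_nonneg _) hq (by norm_num)]
    congr 1
    ring
  have hA : 0 ≤ ‖η‖ ^ (p - 2) := by positivity
  have hB : 0 ≤ ‖ξ‖ ^ (p - 2) := by positivity
  have hC : (0 : ℝ) < 2 ^ (p - 2) := by positivity
  have htri := norm_sub_le η ξ
  have h2 : ‖η - ξ‖ ^ (p - 2) ≤ 2 ^ (p - 2) * (‖η‖ ^ (p - 2) + ‖ξ‖ ^ (p - 2)) := by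
    rcases le_total ‖η‖ ‖ξ‖ with h | h
    · calc ‖η - ξ‖ ^ (p - 2) ≤ (2 * ‖ξ‖) ^ (p - 2) :=
            Real.rpow_le_rpow (norm_nonneg _) (by linarith) hq
        _ = 2 ^ (p - 2) * ‖ξ‖ ^ (p - 2) := Real.mul_rpow (by norm_num) (norm_nonneg _)
        _ ≤ _ := by nlinarith
    · calc ‖η - ξ‖ ^ (p - 2) ≤ (2 * ‖η‖) ^ (p - 2) :=
            Real.rpow_le_rpow (norm_nonneg _) (by linarith) hq
        _ = 2 ^ (p - 2) * ‖η‖ ^ (p - 2) := Real.mul_rpow (by norm_num) (norm_nonneg _)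
        _ ≤ _ := by nlinarith
  have h3 : 0 ≤ (‖η‖ ^ (p - 2) - ‖ξ‖ ^ (p - 2)) * (‖η‖ ^ 2 - ‖ξ‖ ^ 2) := by
    rcases le_total ‖η‖ ‖ξ‖ with h | h
    · exact mul_nonneg_of_nonpos_of_nonpos
        (sub_nonpos.2 (Real.rpow_le_rpow (norm_nonneg _) h hq))
        (sub_nonpos.2 (pow_le_pow_left₀ (norm_nonneg _) h 2))
    · exact mul_nonneg
        (sub_nonneg.2 (Real.rpow_le_rpow (norm_nonneg _) h hq))
        (sub_nonneg.2 (pow_le_pow_left₀ (norm_nonneg _) h 2))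
  have h4 : 2 * ⟪(‖η‖ ^ (p - 2)) • η - (‖ξ‖ ^ (p - 2)) • ξ, η - ξ⟫_ℝ
      = (‖η‖ ^ (p - 2) + ‖ξ‖ ^ (p - 2)) * ‖η - ξ‖ ^ 2
        + (‖η‖ ^ (p - 2) - ‖ξ‖ ^ (p - 2)) * (‖η‖ ^ 2 - ‖ξ‖ ^ 2) := by
    rw [norm_sub_sq_real]
    simp only [inner_sub_left, inner_sub_right, real_inner_smul_left,
      real_inner_self_eq_norm_sq, real_inner_comm η ξ]
    ring
  calc ‖η - ξ‖ ^ p = ‖η - ξ‖ ^ (p - 2) * ‖η - ξ‖ ^ 2 := h1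
    _ ≤ 2 ^ (p - 2) * (‖η‖ ^ (p - 2) + ‖ξ‖ ^ (p - 2)) * ‖η - ξ‖ ^ 2 :=
        mul_le_mul_of_nonneg_right h2 (by positivity)
    _ ≤ 2 ^ (p - 2) * (2 * ⟪(‖η‖ ^ (p - 2)) • η - (‖ξ‖ ^ (p - 2)) • ξ, η - ξ⟫_ℝ) := by
        rw [mul_assoc]
        exact mul_le_mul_of_nonneg_left (by linarith) hC.le
    _ = _ := by ring
end

section
/- Strong monotonicity inequality for the p-Laplacian map, case 1 < p < 2 (inequality (3.15), second case, with a_i ≡ 1): for every real number p with 1 < p < 2 there exists a constant c_p > 0 such that for every N ≥ 1 and all vectors η, ξ ∈ ℝ^N not both zero, |η − ξ|² ≤ c_p (|η| + |ξ|)^{2−p} ⟨|η|^{p−2}η − |ξ|^{p−2}ξ, η − ξ⟩, where ⟨·,·⟩ is the Euclidean inner product, |·| the Euclidean norm, and |x|^{p−2}x is interpreted as 0 when x = 0. -/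
open scoped InnerProductSpace

lemma pLap_aux_bernoulli (p : ℝ) (hp₁ : 1 < p) (hp₂ : p < 2) (a b : ℝ) (ha : 0 < a)
    (hb : 0 ≤ b) : (p - 1) * a ^ (p - 2) * (a - b) ≤ a ^ (p - 2) * a - b ^ (p - 2) * b := by
  have hx : ∀ x : ℝ, 0 ≤ x → x ^ (p - 2) * x = x ^ (p - 1) := by
    intro x hx
    rw [← Real.rpow_add_one' hx (by linarith)]
    congr 1
    ring
  have h1 := rpow_one_add_le_one_add_mul_self (s := b / a - 1) (p := p - 1)
    (by have : 0 ≤ b / a := by positivity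
        linarith) (by linarith) (by linarith)
  have h2 : (1 + (b / a - 1)) = b / a := by ring
  rw [h2, Real.div_rpow hb ha.le, div_le_iff₀ (by positivity), ← hx b hb, ← hx a ha.le] at h1
  have h3 : (1 + (p - 1) * (b / a - 1)) * (a ^ (p - 2) * a)
      = a ^ (p - 2) * a + (p - 1) * a ^ (p - 2) * (b - a) := by
    field_simp
  rw [h3] at h1
  linarith

lemma pLap_aux (p : ℝ) (hp₁ : 1 < p) (hp₂ : p < 2) {E : Type*} [NormedAddCommGroup E]
    [InnerProductSpace ℝ E] (η ξ : E) (hη : η ≠ 0) (hle : ‖ξ‖ ≤ ‖η‖) :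
    ‖η - ξ‖ ^ 2 ≤ (2 / (p - 1)) * (‖η‖ + ‖ξ‖) ^ (2 - p) *
      ⟪(‖η‖ ^ (p - 2)) • η - (‖ξ‖ ^ (p - 2)) • ξ, η - ξ⟫_ℝ := by
  have ha : 0 < ‖η‖ := norm_pos_iff.mpr hη
  have hb := norm_nonneg ξ
  have hber := pLap_aux_bernoulli p hp₁ hp₂ _ _ ha hb
  have ht := real_inner_le_norm η ξ
  have hn := norm_sub_sq_real η ξ
  have hK : 1 ≤ (‖η‖ + ‖ξ‖) ^ (2 - p) * ‖η‖ ^ (p - 2) := by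
    have h := Real.rpow_le_rpow ha.le (by linarith : ‖η‖ ≤ ‖η‖ + ‖ξ‖)
      (by linarith : 0 ≤ 2 - p)
    calc (1 : ℝ) = ‖η‖ ^ (2 - p) * ‖η‖ ^ (p - 2) := by
          rw [← Real.rpow_add ha]; simp
      _ ≤ _ := by gcongr
  have hB : 0 ≤ ‖ξ‖ ^ (p - 2) := by positivity
  have hKpos : 0 ≤ (‖η‖ + ‖ξ‖) ^ (2 - p) := by positivity
  have hin : ⟪(‖η‖ ^ (p - 2)) • η - (‖ξ‖ ^ (p - 2)) • ξ, η - ξ⟫_ℝ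
      = (‖η‖ ^ (p - 2) * ‖η‖ - ‖ξ‖ ^ (p - 2) * ‖ξ‖) * (‖η‖ - ‖ξ‖)
        + (‖η‖ ^ (p - 2) + ‖ξ‖ ^ (p - 2)) * (‖η‖ * ‖ξ‖ - ⟪η, ξ⟫_ℝ) := by
    simp only [inner_sub_left, inner_sub_right, real_inner_smul_left,
      real_inner_self_eq_norm_sq, real_inner_comm η ξ]
    ring
  rw [hn, hin]
  generalize ‖η‖ ^ (p - 2) = A at *
  generalize ‖ξ‖ ^ (p - 2) = B at *
  generalize (‖η‖ + ‖ξ‖) ^ (2 - p) = K at *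
  generalize ⟪η, ξ⟫_ℝ = t at *
  generalize ‖η‖ = a at *
  generalize ‖ξ‖ = b at *
  have hq : 0 < p - 1 := by linarith
  have hu : 0 ≤ a * b - t := by linarith
  have hd : 0 ≤ a - b := by linarith
  have e1 : (p - 1) * (a - b) ^ 2 ≤ K * ((A * a - B * b) * (a - b)) := by
    calc (p - 1) * (a - b) ^ 2 = 1 * ((p - 1) * (a - b) ^ 2) := by ring
      _ ≤ (K * A) * ((p - 1) * (a - b) ^ 2) := by gcongr
      _ = K * (((p - 1) * A * (a - b)) * (a - b)) := by ring
      _ ≤ _ := by gcongr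
  have e2 : a * b - t ≤ K * ((A + B) * (a * b - t)) := by
    have : 1 ≤ K * (A + B) := by nlinarith [mul_nonneg hKpos hB]
    nlinarith
  have e3 : (p - 1) * (a * b - t) ≤ a * b - t := by nlinarith
  rw [div_mul_eq_mul_div, div_mul_eq_mul_div, le_div_iff₀ hq]
  nlinarith [mul_nonneg hq.le (sq_nonneg (a - b))]

/-- Strong monotonicity inequality for the p-Laplacian map, case `1 < p < 2`
(inequality (3.15), second case, with `a_i ≡ 1`).
Note that for `x = 0` the vector `(‖x‖ ^ (p - 2)) • x` equals `0`, in accordance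
with the convention `|0|^{p-2}·0 = 0`. -/
theorem pLaplacian_strong_monotonicity_lt_two
    (p : ℝ) (hp₁ : 1 < p) (hp₂ : p < 2) :
    ∃ c : ℝ, 0 < c ∧
      ∀ (N : ℕ), 1 ≤ N → ∀ η ξ : EuclideanSpace ℝ (Fin N), (η ≠ 0 ∨ ξ ≠ 0) →
        ‖η - ξ‖ ^ 2 ≤
          c * (‖η‖ + ‖ξ‖) ^ (2 - p) *
            ⟪(‖η‖ ^ (p - 2)) • η - (‖ξ‖ ^ (p - 2)) • ξ, η - ξ⟫_ℝ := by
  refine ⟨2 / (p - 1), div_pos two_pos (by linarith), ?_⟩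
  intro N _ η ξ h
  rcases le_total ‖ξ‖ ‖η‖ with hle | hle
  · refine pLap_aux p hp₁ hp₂ η ξ ?_ hle
    rintro rfl
    simp_all
  · have h2 := pLap_aux p hp₁ hp₂ ξ η (by rintro rfl; simp_all) hle
    rw [norm_sub_rev, add_comm ‖η‖, ← inner_neg_neg, neg_sub, neg_sub]
    exact h2
end

section
/- Verification of condition (H_{a₃}) for the generalized capillary operator (Example III): let p > 1 be a real number, let a(s) := 1 + s/√(1+s²) for s ≥ 0, and define g(t) := a(t^p) t^{p−2} for t > 0. Then g is differentiable on (0,∞) and for every t > 0 one has g(t) ≥ t^{p−2} and g(t) + t·g'(t) ≥ (p−1) t^{p−2}; consequently min{g(t), g(t) + t·g'(t)} ≥ c·t^{p−2} for all t > 0 with c := min{1, p−1} > 0. -/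
theorem capillary_aux (s : ℝ) :
    ∃ d : ℝ, 0 ≤ d ∧ HasDerivAt (fun s : ℝ => 1 + s / Real.sqrt (1 + s ^ 2)) d s := by
  have hpos : 0 < 1 + s ^ 2 := by positivity
  have hr : 0 < Real.sqrt (1 + s ^ 2) := Real.sqrt_pos.mpr hpos
  have h1 : HasDerivAt (fun s : ℝ => 1 + s ^ 2) (2 * s) s := by
    simpa using ((hasDerivAt_id s).pow 2).const_add 1
  have h2 := h1.sqrt hpos.ne'
  have h3 := ((hasDerivAt_id s).div h2 hr.ne').const_add 1
  refine ⟨_, ?_, h3⟩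
  apply div_nonneg _ (by positivity)
  have hsq := Real.sq_sqrt hpos.le
  set r := Real.sqrt (1 + s ^ 2)
  have : 1 * r - id s * (2 * s / (2 * r)) = 1 / r := by
    simp only [id]
    field_simp
    linarith
  rw [this]
  positivity

/-- Verification of condition `(H_{a₃})` for the generalized capillary operator
(Example III). -/
theorem capillary_condition_Ha3
    (p : ℝ) (hp : 1 < p)
    (a : ℝ → ℝ) (ha : ∀ s : ℝ, a s = 1 + s / Real.sqrt (1 + s ^ 2))
    (g : ℝ → ℝ) (hg : ∀ t : ℝ, g t = a (t ^ p) * t ^ (p - 2)) :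
    (∀ t : ℝ, 0 < t → DifferentiableAt ℝ g t) ∧
      (∀ t : ℝ, 0 < t → t ^ (p - 2) ≤ g t) ∧
      (∀ t : ℝ, 0 < t → (p - 1) * t ^ (p - 2) ≤ g t + t * deriv g t) ∧
      (0 < min 1 (p - 1) ∧
        ∀ t : ℝ, 0 < t →
          min 1 (p - 1) * t ^ (p - 2) ≤ min (g t) (g t + t * deriv g t)) := by
  have haf : a = fun s : ℝ => 1 + s / Real.sqrt (1 + s ^ 2) := funext ha
  have hgf : g = fun t : ℝ => a (t ^ p) * t ^ (p - 2) := funext hg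
  have key : ∀ t : ℝ, 0 < t → 1 ≤ a (t ^ p) := by
    intro t ht
    rw [ha]
    have : 0 ≤ t ^ p / Real.sqrt (1 + (t ^ p) ^ 2) := by positivity
    linarith
  have hd : ∀ t : ℝ, 0 < t → ∃ d : ℝ, 0 ≤ d ∧
      HasDerivAt g (d * (p * t ^ (p - 1)) * t ^ (p - 2)
        + a (t ^ p) * ((p - 2) * t ^ (p - 2 - 1))) t := by
    intro t ht
    obtain ⟨d, hd0, hd⟩ := capillary_aux (t ^ p)
    rw [← haf] at hd
    refine ⟨d, hd0, ?_⟩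
    have h1 := Real.hasDerivAt_rpow_const (x := t) (p := p) (Or.inl ht.ne')
    have h2 := Real.hasDerivAt_rpow_const (x := t) (p := p - 2) (Or.inl ht.ne')
    rw [hgf]
    exact (hd.comp t h1).mul h2
  have hA : ∀ t : ℝ, 0 < t → t ^ (p - 2) ≤ g t := by
    intro t ht
    rw [hg]
    exact le_mul_of_one_le_left (by positivity) (key t ht)
  have hB : ∀ t : ℝ, 0 < t → (p - 1) * t ^ (p - 2) ≤ g t + t * deriv g t := by
    intro t ht
    obtain ⟨d, hd0, hd⟩ := hd t ht
    rw [hd.deriv, hg]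
    have e : t * t ^ (p - 2 - 1) = t ^ (p - 2) := by
      rw [Real.rpow_sub_one ht.ne']
      field_simp
    have h0 : 0 ≤ t * (d * (p * t ^ (p - 1)) * t ^ (p - 2)) := by
      have : 0 < p := by linarith
      positivity
    have h1 : (p - 1) * t ^ (p - 2) ≤ a (t ^ p) * ((p - 1) * t ^ (p - 2)) := by
      apply le_mul_of_one_le_left _ (key t ht)
      exact mul_nonneg (by linarith) (by positivity)
    have h2 : t * (a (t ^ p) * ((p - 2) * t ^ (p - 2 - 1)))
        = a (t ^ p) * ((p - 2) * t ^ (p - 2)) := by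
      rw [← e]; ring
    rw [mul_add, h2]
    linarith
  refine ⟨fun t ht => ?_, hA, hB, lt_min one_pos (by linarith), fun t ht => le_min ?_ ?_⟩
  · obtain ⟨d, _, hd⟩ := hd t ht
    exact hd.differentiableAt
  · have hq : 0 ≤ t ^ (p - 2) := by positivity
    have := mul_le_mul_of_nonneg_right (min_le_left 1 (p - 1)) hq
    linarith [hA t ht]
  · have hq : 0 ≤ t ^ (p - 2) := by positivity
    exact (mul_le_mul_of_nonneg_right (min_le_right 1 (p - 1)) hq).trans (hB t ht)
end
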